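/- Let M > M₁(Ω₁) and let u^ε be the strictly k-convex solution of problem (2.1), assumed C² up to ∂B_ε(0). Then there is a constant C > 0, depending on n, k, Ω₁ and M but independent of ε, such that for every p ∈ ∂B_ε(0), with ν = p/ε the unit normal pointing into Ω^ε and τ any unit vector tangent to ∂B_ε(0) at p, one has |D²u^ε(p)(τ, ν)| ≤ (C/ε)·(Du^ε(p)·ν). -/

import Mathlib

open Set Metric Filter Topology Bornology
open scoped RealInnerProductSpace

noncomputable section

/-- Euclidean `n`-space. -/
abbrev Euc (n : ℕ) := EuclideanSpace ℝ (Fin n)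

/-- The `k`-th elementary symmetric polynomial of a vector `lam ∈ ℝⁿ`. -/
def esymmVec {n : ℕ} (k : ℕ) (lam : Fin n → ℝ) : ℝ :=
  ∑ S ∈ Finset.powersetCard k (Finset.univ : Finset (Fin n)), ∏ i ∈ S, lam i

/-- `σ_k(A)`: the `k`-th elementary symmetric polynomial of the eigenvalues of a
symmetric matrix `A` (junk value `0` if `A` is not symmetric). -/
noncomputable def sigmaMat {n : ℕ} (k : ℕ) (A : Matrix (Fin n) (Fin n) ℝ) : ℝ := by
  classical exact if h : A.IsHermitian then esymmVec k h.eigenvalues else 0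

/-- The eigenvalues of the symmetric matrix `A` lie in the Gårding cone
`Γ_k = {λ : σ_j(λ) > 0, j = 1, …, k}`. -/
def InGardingCone {n : ℕ} (k : ℕ) (A : Matrix (Fin n) (Fin n) ℝ) : Prop :=
  ∃ h : A.IsHermitian, ∀ j : ℕ, 1 ≤ j → j ≤ k → 0 < esymmVec j h.eigenvalues

/-- The Hessian matrix of `u` at `x`, with derivatives taken within the set `s`. -/
noncomputable def hessianWithin {n : ℕ} (u : Euc n → ℝ) (s : Set (Euc n)) (x : Euc n) :
    Matrix (Fin n) (Fin n) ℝ :=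
  fun i j => iteratedFDerivWithin ℝ 2 u s x
    ![EuclideanSpace.single i (1:ℝ), EuclideanSpace.single j (1:ℝ)]

/-- The Hessian matrix `D²u(x)` of `u` at `x`. -/
noncomputable def hessian {n : ℕ} (u : Euc n → ℝ) (x : Euc n) : Matrix (Fin n) (Fin n) ℝ :=
  fun i j => iteratedFDeriv ℝ 2 u x
    ![EuclideanSpace.single i (1:ℝ), EuclideanSpace.single j (1:ℝ)]

/-- Operator norm of the Hessian matrix of `u` at `x` (derivatives within `s`). -/
noncomputable def hessOpNormWithin {n : ℕ} (u : Euc n → ℝ) (s : Set (Euc n)) (x : Euc n) : ℝ :=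
  ‖Matrix.toEuclideanCLM (𝕜 := ℝ) (hessianWithin u s x)‖

/-- A set has smooth boundary: it is the sublevel set of a smooth defining function
with nonvanishing differential on the boundary. -/
def HasSmoothBoundary {n : ℕ} (Ω : Set (Euc n)) : Prop :=
  ∃ ρ : Euc n → ℝ, ContDiff ℝ (⊤ : ℕ∞) ρ ∧ Ω = {x | ρ x < 0} ∧
    ∀ x ∈ frontier Ω, fderiv ℝ ρ x ≠ 0

/-- `c_{n,k} = (C(n,k))^{1/k}` where `C(n,k)` is the binomial coefficient. -/
noncomputable def cnk (n k : ℕ) : ℝ := (n.choose k : ℝ) ^ ((1:ℝ)/(k:ℝ))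

/-- The radially symmetric subsolution `|x - x₀|²/(2c_{n,k}) − ε²/(2c_{n,k}) − M`. -/
noncomputable def underSol {n : ℕ} (k : ℕ) (x₀ : Euc n) (ε M : ℝ) (x : Euc n) : ℝ :=
  ‖x - x₀‖^2 / (2 * cnk n k) - ε^2 / (2 * cnk n k) - M

/-- The closed ring `Ω̄^ε = closure (Ω₁ \ B̄_ε(x₀))`. -/
def ringSet {n : ℕ} (Ω₁ : Set (Euc n)) (x₀ : Euc n) (ε : ℝ) : Set (Euc n) :=
  closure (Ω₁ \ closedBall x₀ ε)

/-- `u` is a strictly `k`-convex solution of problem (2.1):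
`σ_k(D²u) = 1` in `Ω^ε = Ω₁ \ B̄_ε(x₀)`, `u = 0` on `∂Ω₁`, `u = −M` on `∂B_ε(x₀)`,
with `u ∈ C²(Ω̄^ε)`. -/
def IsSol {n : ℕ} (k : ℕ) (Ω₁ : Set (Euc n)) (x₀ : Euc n) (ε M : ℝ) (u : Euc n → ℝ) : Prop :=
  ContDiffOn ℝ 2 u (ringSet Ω₁ x₀ ε) ∧
  (∀ x ∈ Ω₁ \ closedBall x₀ ε,
      InGardingCone k (hessianWithin u (ringSet Ω₁ x₀ ε) x) ∧
      sigmaMat k (hessianWithin u (ringSet Ω₁ x₀ ε) x) = 1) ∧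
  (∀ x ∈ frontier Ω₁, u x = 0) ∧
  (∀ x ∈ sphere x₀ ε, u x = -M)

/-- `ψ` is a strictly `k`-convex solution of problem (2.2):
`σ_k(D²ψ) = 1` in `Ω₁`, `ψ = 0` on `∂Ω₁`, with `ψ ∈ C^∞(Ω̄₁)`. -/
def IsSol22 {n : ℕ} (k : ℕ) (Ω₁ : Set (Euc n)) (ψ : Euc n → ℝ) : Prop :=
  ContDiffOn ℝ (⊤ : ℕ∞) ψ (closure Ω₁) ∧
  (∀ x ∈ Ω₁, InGardingCone k (hessianWithin ψ (closure Ω₁) x) ∧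
      sigmaMat k (hessianWithin ψ (closure Ω₁) x) = 1) ∧
  (∀ x ∈ frontier Ω₁, ψ x = 0)

/-- `u` is a strictly `k`-convex solution of the Dirichlet problem on the convex ring
`Ω = Ω₁ \ Ω̄₂`: `σ_k(D²u) = 1` in `Ω`, `u = 0` on `∂Ω₁`, `u = −M` on `∂Ω₂`,
with `u ∈ C²(Ω̄)`. -/
def IsSolRing {n : ℕ} (k : ℕ) (Ω₁ Ω₂ : Set (Euc n)) (M : ℝ) (u : Euc n → ℝ) : Prop :=
  ContDiffOn ℝ 2 u (closure (Ω₁ \ closure Ω₂)) ∧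
  (∀ x ∈ Ω₁ \ closure Ω₂,
      InGardingCone k (hessianWithin u (closure (Ω₁ \ closure Ω₂)) x) ∧
      sigmaMat k (hessianWithin u (closure (Ω₁ \ closure Ω₂)) x) = 1) ∧
  (∀ x ∈ frontier Ω₁, u x = 0) ∧
  (∀ x ∈ frontier Ω₂, u x = -M)

/-- The extension `ũ` of `u`, equal to `−M` on the closed ball `B̄_ε(x₀)`. -/
noncomputable def extendBy {n : ℕ} (u : Euc n → ℝ) (x₀ : Euc n) (ε M : ℝ) (x : Euc n) : ℝ := by
  classical exact if x ∈ closedBall x₀ ε then -M else u x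

/-- The extension `ũ` of `u`, equal to `−M` on the set `Ω₂`. -/
noncomputable def extendOn {n : ℕ} (u : Euc n → ℝ) (Ω₂ : Set (Euc n)) (M : ℝ) (x : Euc n) : ℝ := by
  classical exact if x ∈ Ω₂ then -M else u x

/-- The quadratic polynomial with Hessian `A`, linear part `b` and constant term `c`. -/
noncomputable def quadPoly {n : ℕ} (A : Matrix (Fin n) (Fin n) ℝ) (b : Euc n) (c : ℝ)
    (x : Euc n) : ℝ :=
  (∑ i, ∑ j, A i j * x i * x j) / 2 + ⟪b, x⟫ + c

section Algebra
open Polynomial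

theorem splits_derivative' {f : ℝ[X]} (hf : f.Splits) : (derivative f).Splits := by
  rw [splits_iff_card_roots] at hf ⊢
  have h1 := card_roots_le_derivative f
  have h2 := card_roots' (derivative f)
  have h3 := natDegree_derivative_le f
  rcases Nat.eq_zero_or_pos f.natDegree with h0 | h0
  · have : natDegree (derivative f) = 0 := by omega
    omega
  · omega

theorem splits_iter_derivative {f : ℝ[X]} (hf : f.Splits) (m : ℕ) :
    ((derivative)^[m] f).Splits := by
  induction m with
  | zero => simpa using hf
  | succ m ih => rw [Function.iterate_succ_apply']; exact splits_derivative' ih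

theorem laguerre_prod (s : Multiset ℝ) (c : ℝ) (x : ℝ) :
    (C c * (s.map (fun a => X - C a)).prod).eval x *
      (derivative (derivative (C c * (s.map (fun a => X - C a)).prod))).eval x ≤
    ((derivative (C c * (s.map (fun a => X - C a)).prod)).eval x) ^ 2 := by
  induction s using Multiset.induction_on with
  | empty => simp
  | cons a s ih =>
    have e : C c * ((a ::ₘ s).map (fun a => X - C a)).prod
        = (C c * (s.map (fun a => X - C a)).prod) * (X - C a) := by
      simp only [Multiset.map_cons, Multiset.prod_cons]; ring
    rw [e]
    generalize (C c * (s.map (fun a => X - C a)).prod) = q at *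
    simp only [derivative_mul, derivative_add, derivative_sub, derivative_X, derivative_C, sub_zero,
      mul_one, eval_add, eval_mul, eval_sub, eval_X, eval_C]
    nlinarith [mul_le_mul_of_nonneg_left ih (sq_nonneg (x - a)), sq_nonneg (eval x q)]

theorem newton_weak {f : ℝ[X]} (hf : f.Splits) (j : ℕ) :
    f.coeff j * f.coeff (j + 2) ≤ f.coeff (j + 1) ^ 2 := by
  have hs := splits_iter_derivative hf j
  have h := laguerre_prod ((derivative)^[j] f).roots ((derivative)^[j] f).leadingCoeff 0
  rw [← hs.eq_prod_roots] at h
  have e0 : ((derivative)^[j] f).eval 0 = j.factorial * f.coeff j := by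
    rw [← coeff_zero_eq_eval_zero, coeff_iterate_derivative]
    simp [Nat.descFactorial_self]
  have e1 : (derivative ((derivative)^[j] f)).eval 0 = (j+1).factorial * f.coeff (j+1) := by
    rw [← Function.iterate_succ_apply' (f := derivative), ← coeff_zero_eq_eval_zero,
      coeff_iterate_derivative, nsmul_eq_mul, Nat.succ_eq_add_one, zero_add, Nat.descFactorial_self]
  have e2 : (derivative (derivative ((derivative)^[j] f))).eval 0
      = (j+2).factorial * f.coeff (j+2) := by
    rw [← Function.iterate_succ_apply' (f := derivative),
      ← Function.iterate_succ_apply' (f := derivative), ← coeff_zero_eq_eval_zero,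
      coeff_iterate_derivative, nsmul_eq_mul, Nat.succ_eq_add_one, zero_add, Nat.descFactorial_self]
  rw [e0, e1, e2] at h
  have hF : (0:ℝ) < j.factorial := by exact_mod_cast Nat.factorial_pos j
  have f1 : ((j+1).factorial : ℝ) = (j+1) * j.factorial := by
    rw [Nat.factorial_succ]; push_cast; ring
  have f2 : ((j+2).factorial : ℝ) = (j+2) * ((j+1) * j.factorial) := by
    rw [Nat.factorial_succ, Nat.factorial_succ]; push_cast; ring
  rw [f1, f2] at h
  set a := f.coeff j
  set b := f.coeff (j+1)
  set c := f.coeff (j+2)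
  set F : ℝ := (j.factorial : ℝ)
  have hj : (0:ℝ) ≤ j := Nat.cast_nonneg j
  have h' : ((j:ℝ)+1) * F^2 * (((j:ℝ)+2) * (a * c)) ≤ ((j:ℝ)+1) * F^2 * (((j:ℝ)+1) * b^2) := by
    nlinarith [h]
  have h'' := le_of_mul_le_mul_left h' (by positivity)
  by_contra hc
  push Not at hc
  nlinarith [sq_nonneg b, mul_pos (show (0:ℝ) < j+1 by positivity) (sub_pos.2 hc)]

theorem pos_of_mul {f : ℝ[X]} (hf : f.Splits) (hm : f.Monic) (a : ℝ) (k : ℕ)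
    (hk : k ≤ f.natDegree + 1)
    (hF : ∀ j ≤ k, 0 < (f * (X + C a)).coeff (f.natDegree + 1 - j)) :
    ∀ j, j + 1 ≤ k → 0 < f.coeff (f.natDegree - j) := by
  intro j
  induction j with
  | zero => intro _; simp [hm.coeff_natDegree]
  | succ j ih =>
    intro hj
    have i1 := ih (by omega)
    obtain ⟨d, hd⟩ : ∃ d, f.natDegree = d + (j + 1) := ⟨f.natDegree - (j+1), by omega⟩
    have e1 : f.natDegree - j = d + 1 := by omega
    have e2 : f.natDegree - (j+1) = d := by omega
    have e3 : f.natDegree + 1 - (j+1) = d + 1 := by omega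
    have e4 : f.natDegree + 1 - (j+2) = d := by omega
    have F1 := hF (j+1) (by omega)
    have F2 := hF (j+2) (by omega)
    rw [e3] at F1
    rw [e4] at F2
    rw [e1] at i1
    rw [e2]
    have F1' : 0 < f.coeff d + a * f.coeff (d+1) := by
      rw [mul_add, coeff_add, coeff_mul_X, coeff_mul_C] at F1
      linarith
    by_contra hc
    push Not at hc
    rcases d with _ | d
    · have F2' : 0 < f.coeff 0 * a := by
        simpa [mul_add] using F2
      have ha : 0 < a := by
        by_contra h; push Not at h
        nlinarith
      nlinarith
    · have F2' : 0 < f.coeff d + a * f.coeff (d+1) := by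
        rw [mul_add, coeff_add, coeff_mul_X, coeff_mul_C] at F2
        linarith
      have N := newton_weak hf d
      have := mul_pos F2' i1
      nlinarith [mul_nonneg (neg_nonneg.2 hc) F1'.le]

theorem esymmVec_eq {n : ℕ} (lam : Fin n → ℝ) (j : ℕ) (hj : j ≤ n) :
    esymmVec j lam = (∏ i, (X + C (lam i))).coeff (n - j) := by
  rw [Finset.prod_X_add_C_coeff _ _ (by simp)]
  simp only [Finset.card_univ, Fintype.card_fin]
  rw [Nat.sub_sub_self hj]
  rfl

/-- coefficient form of sigma -/
def sg {n : ℕ} (j : ℕ) (A : Matrix (Fin n) (Fin n) ℝ) : ℝ := (-A).charpoly.coeff (n - j)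

theorem sg_pol {n : ℕ} (A : Matrix (Fin n) (Fin n) ℝ) (hA : A.IsHermitian) :
    (-A).charpoly = ∏ i, (X + C (hA.eigenvalues i)) := by
  have h := hA.spectral_theorem
  conv_lhs => rw [h, Unitary.conjStarAlgAut_apply, ← neg_mul, ← mul_neg, Matrix.charpoly_mul_comm, ← mul_assoc]
  simp only [Unitary.coe_star_mul_self, one_mul, Matrix.diagonal_neg, Matrix.charpoly_diagonal]
  simp

theorem sg_eq {n : ℕ} (A : Matrix (Fin n) (Fin n) ℝ) (hA : A.IsHermitian) (j : ℕ) (hj : j ≤ n) :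
    esymmVec j hA.eigenvalues = sg j A := by
  rw [esymmVec_eq _ _ hj, sg, sg_pol A hA]

theorem det_diag_rank_one {n : ℕ} (a w : Fin n → ℝ) (ha : ∀ i, a i ≠ 0) :
    (Matrix.diagonal a + Matrix.vecMulVec w w).det =
      ∏ i, a i + ∑ i, w i ^ 2 * ∏ j ∈ Finset.univ.erase i, a j := by
  have h := Matrix.det_add_replicateCol_mul_replicateRow (ι := Unit) (A := Matrix.diagonal a)
    (by simp [Matrix.det_diagonal, Finset.prod_ne_zero_iff, ha]) w w
  have e : Matrix.replicateCol Unit w * Matrix.replicateRow Unit w = Matrix.vecMulVec w w := by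
    ext i j; simp [Matrix.mul_apply, Matrix.vecMulVec_apply]
  rw [e] at h
  rw [h, Matrix.det_unique (n := Unit), Matrix.det_diagonal]
  have hi : (Matrix.diagonal a)⁻¹ = Matrix.diagonal (fun i => (a i)⁻¹) := by
    apply Matrix.inv_eq_right_inv
    rw [Matrix.diagonal_mul_diagonal]
    simp [ha]
  rw [hi]
  have : (1 + Matrix.replicateRow Unit w * Matrix.diagonal (fun i => (a i)⁻¹) * Matrix.replicateCol Unit w : Matrix Unit Unit ℝ) default default
    = 1 + ∑ i, w i ^2 * (a i)⁻¹ := by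
    simp [Matrix.mul_apply, Matrix.diagonal_apply]
    refine Finset.sum_congr rfl fun i _ => by ring
  rw [this, mul_add, mul_one, Finset.mul_sum]
  congr 1
  apply Finset.sum_congr rfl
  intro i _
  rw [← Finset.mul_prod_erase Finset.univ a (Finset.mem_univ i)]
  field_simp [ha i]

theorem charpoly_diag_rank_one {n : ℕ} (d w : Fin n → ℝ) :
    (-(Matrix.diagonal d + Matrix.vecMulVec w w)).charpoly =
      ∏ i, (X + C (d i)) + ∑ i, C (w i ^ 2) * ∏ j ∈ Finset.univ.erase i, (X + C (d j)) := by
  apply Polynomial.eq_of_infinite_eval_eq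
  have hinf : {t : ℝ | ∀ i, t + d i ≠ 0}.Infinite := by
    have : {t : ℝ | ∀ i, t + d i ≠ 0} = (Set.range (fun i => - d i))ᶜ := by
      ext t
      simp only [Set.mem_ofPred_eq, Set.mem_compl_iff, Set.mem_range, not_exists]
      refine forall_congr' fun i => not_congr ⟨fun h => by linarith, fun h => by linarith⟩
    rw [this]
    exact (Set.finite_range _).infinite_compl
  refine hinf.mono ?_
  intro t ht
  simp only [Set.mem_ofPred_eq] at ht ⊢
  rw [Matrix.eval_charpoly]
  have e : (Matrix.scalar (Fin n)) t - -(Matrix.diagonal d + Matrix.vecMulVec w w)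
    = Matrix.diagonal (fun i => t + d i) + Matrix.vecMulVec w w := by
    ext i j
    by_cases h : i = j
    · subst h; simp; ring
    · simp [h]
  rw [e, det_diag_rank_one _ _ ht]
  simp [eval_prod, eval_finsetSum]

theorem sg_rank_one {n k : ℕ} (hkn : k ≤ n) (A : Matrix (Fin n) (Fin n) ℝ) (hA : A.IsHermitian)
    (hp : ∀ j ≤ k, 0 < sg j A) (v : Fin n → ℝ) :
    ∀ j ≤ k, sg j A ≤ sg j (A + Matrix.vecMulVec v v) := by
  intro j hj
  have h := hA.spectral_theorem
  rw [Unitary.conjStarAlgAut_apply] at h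
  set U : Matrix (Fin n) (Fin n) ℝ := (hA.eigenvectorUnitary : Matrix (Fin n) (Fin n) ℝ) with hU
  have hU1 : star U * U = 1 := Unitary.coe_star_mul_self hA.eigenvectorUnitary
  have hU2 : U * star U = 1 := Unitary.coe_mul_star_self hA.eigenvectorUnitary
  set d := hA.eigenvalues with hd
  set w : Fin n → ℝ := (star U).mulVec v with hw
  have hpol := sg_pol A hA
  have key : (-(A + Matrix.vecMulVec v v)).charpoly
      = (-(Matrix.diagonal d + Matrix.vecMulVec w w)).charpoly := by
    have e : A + Matrix.vecMulVec v v = U * (Matrix.diagonal d + Matrix.vecMulVec w w) * star U := by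
      rw [mul_add, add_mul]
      congr 1
      rw [Matrix.mul_vecMulVec, Matrix.vecMulVec_mul, hw, Matrix.mulVec_mulVec, hU2,
        Matrix.one_mulVec]
      congr 1
      rw [← Matrix.vecMul_transpose, Matrix.vecMul_vecMul]
      have : (star U).transpose * star U = 1 := by
        rw [← hU2, Matrix.star_eq_conjTranspose]
        ext i j; simp [Matrix.mul_apply]
      rw [this, Matrix.vecMul_one]
    rw [e, ← neg_mul, ← mul_neg, Matrix.charpoly_mul_comm, ← mul_assoc, hU1, one_mul]
  rw [sg, sg, key, charpoly_diag_rank_one, coeff_add, hpol, finsetSum_coeff]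
  have : ∀ i ∈ Finset.univ, 0 ≤ (C (w i ^ 2) * ∏ j ∈ Finset.univ.erase i, (X + C (d j))).coeff (n - j) := by
    intro i _
    rw [coeff_C_mul]
    apply mul_nonneg (sq_nonneg _)
    set f := ∏ j ∈ Finset.univ.erase i, (X + C (d j)) with hf
    have hdeg : f.natDegree = n - 1 := by
      rw [hf, natDegree_prod_of_monic _ _ (fun j _ => monic_X_add_C _)]
      simp
    have hmon : f.Monic := monic_prod_of_monic _ _ (fun j _ => monic_X_add_C _)
    have hspl : f.Splits := Splits.prod (fun j _ => Splits.X_add_C _)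
    have hn : 0 < n := lt_of_le_of_lt (Nat.zero_le _) i.2
    have hmul : f * (X + C (d i)) = ∏ j, (X + C (d j)) := by
      rw [hf, Finset.prod_erase_mul _ _ (Finset.mem_univ i)]
    rcases Nat.eq_zero_or_pos j with rfl | hj0
    · rw [coeff_eq_zero_of_natDegree_lt (by omega)]
    · have := pos_of_mul hspl hmon (d i) k (by omega) (by
        intro l hl
        have := hp l hl
        rw [sg, hpol] at this
        rw [hmul, hdeg, show n - 1 + 1 - l = n - l by omega]
        exact this) (j-1) (by omega)
      rw [hdeg, show n - 1 - (j-1) = n - j by omega] at this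
      exact this.le
  linarith [Finset.sum_nonneg this]

open scoped MatrixOrder in
theorem psd_factor {n : ℕ} {P : Matrix (Fin n) (Fin n) ℝ} (hP : P.PosSemidef) :
    ∃ B : Matrix (Fin n) (Fin n) ℝ, P = star B * B :=
  CStarAlgebra.nonneg_iff_eq_star_mul_self.mp hP.nonneg

theorem sg_mono {n k : ℕ} (hkn : k ≤ n) (A P : Matrix (Fin n) (Fin n) ℝ) (hA : A.IsHermitian)
    (hp : ∀ j ≤ k, 0 < sg j A) (hP : P.PosSemidef) :
    ∀ j ≤ k, sg j A ≤ sg j (A + P) := by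
  obtain ⟨B, hB⟩ := psd_factor hP
  have hPs : P = ∑ i, Matrix.vecMulVec (B i) (B i) := by
    rw [hB]; ext a b
    simp [Matrix.mul_apply, Matrix.sum_apply, Matrix.vecMulVec_apply, Matrix.star_eq_conjTranspose]
  rw [hPs]
  have : ∀ s : Finset (Fin n), (A + ∑ i ∈ s, Matrix.vecMulVec (B i) (B i)).IsHermitian ∧
      ∀ j ≤ k, sg j A ≤ sg j (A + ∑ i ∈ s, Matrix.vecMulVec (B i) (B i)) := by
    intro s
    induction s using Finset.induction_on with
    | empty => simpa using hA
    | insert a s ha ih =>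
      rw [Finset.sum_insert ha, add_comm (Matrix.vecMulVec _ _), ← add_assoc]
      refine ⟨ih.1.add ?_, fun j hj => (ih.2 j hj).trans
        (sg_rank_one hkn _ ih.1 (fun l hl => (hp l hl).trans_le (ih.2 l hl)) _ j hj)⟩
      ext i j; simp [Matrix.vecMulVec_apply, mul_comm]
  exact (this _).2
end Algebra

section Algebra2
open Polynomial

theorem sg_smul {n : ℕ} (A : Matrix (Fin n) (Fin n) ℝ) (hA : A.IsHermitian) (c : ℝ) (j : ℕ)
    (hj : j ≤ n) : sg j (c • A) = c ^ j * sg j A := by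
  have h := hA.spectral_theorem
  rw [Unitary.conjStarAlgAut_apply] at h
  have e : (-(c • A)).charpoly = ∏ i, (X + C (c * hA.eigenvalues i)) := by
    conv_lhs => rw [h, ← smul_mul_assoc, ← mul_smul_comm, ← neg_mul, ← mul_neg, mul_assoc,
      Matrix.charpoly_mul_comm]
    rw [mul_assoc, Unitary.coe_star_mul_self, mul_one]
    rw [← Matrix.diagonal_smul, Matrix.diagonal_neg, Matrix.charpoly_diagonal]
    simp
  rw [sg, e, ← esymmVec_eq _ _ hj, ← sg_eq A hA j hj, esymmVec, esymmVec, Finset.mul_sum]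
  refine Finset.sum_congr rfl fun S hS => ?_
  rw [Finset.prod_mul_distrib, Finset.prod_const, (Finset.mem_powersetCard.1 hS).2]

theorem charpoly_shift {n : ℕ} (A : Matrix (Fin n) (Fin n) ℝ) (t : ℝ) :
    (-(A + t • (1 : Matrix (Fin n) (Fin n) ℝ))).charpoly = taylor t (-A).charpoly := by
  apply Polynomial.funext
  intro x
  rw [taylor_eval, Matrix.eval_charpoly, Matrix.eval_charpoly]
  congr 1
  ext i j
  by_cases h : i = j
  · subst h; simp; ring
  · simp [h]

theorem sg_shift {n : ℕ} (A : Matrix (Fin n) (Fin n) ℝ) (t : ℝ) (j : ℕ) :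
    sg j (A + t • (1 : Matrix (Fin n) (Fin n) ℝ)) = (hasseDeriv (n - j) (-A).charpoly).eval t := by
  rw [sg, charpoly_shift, taylor_coeff]

theorem hd_coeff {n k : ℕ} (hkn : k ≤ n) (A : Matrix (Fin n) (Fin n) ℝ) (i : ℕ) (hi : i ≤ k) :
    (hasseDeriv (n - k) (-A).charpoly).coeff i = ((i + (n-k)).choose (n-k) : ℝ) * sg (k - i) A := by
  rw [hasseDeriv_coeff, sg, show n - (k - i) = i + (n-k) by omega]

theorem hd_deg {n k : ℕ} (hkn : k ≤ n) (A : Matrix (Fin n) (Fin n) ℝ) :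
    (hasseDeriv (n - k) (-A).charpoly).natDegree = k := by
  rw [natDegree_hasseDeriv, Matrix.charpoly_natDegree_eq_dim, Fintype.card_fin]
  omega

theorem sg_zero {n : ℕ} (A : Matrix (Fin n) (Fin n) ℝ) : sg 0 A = 1 := by
  have h := (Matrix.charpoly_monic (-A)).coeff_natDegree
  rw [Matrix.charpoly_natDegree_eq_dim, Fintype.card_fin] at h
  simpa [sg] using h

theorem hd_coeff_pos {n k : ℕ} (hkn : k ≤ n) (A : Matrix (Fin n) (Fin n) ℝ)
    (hp : ∀ j ≤ k, 0 < sg j A) (i : ℕ) (hi : i ≤ k) :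
    0 < (hasseDeriv (n - k) (-A).charpoly).coeff i := by
  rw [hd_coeff hkn A i hi]
  refine mul_pos ?_ (hp _ (by omega))
  exact_mod_cast Nat.choose_pos (by omega)

theorem sg_shift_lt {n k : ℕ} (hk : 1 ≤ k) (hkn : k ≤ n) (A : Matrix (Fin n) (Fin n) ℝ)
    (hp : ∀ j ≤ k, 0 < sg j A) (t : ℝ) (ht : 0 < t) :
    sg k A < sg k (A + t • (1 : Matrix (Fin n) (Fin n) ℝ)) := by
  rw [sg_shift, eval_eq_sum_range, hd_deg hkn]
  obtain ⟨m, rfl⟩ : ∃ m, k = m + 1 := ⟨k - 1, by omega⟩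
  rw [Finset.sum_range_succ, Finset.sum_range_succ']
  have h0 := hd_coeff hkn A 0 (by omega)
  simp only [zero_add, Nat.choose_self, Nat.cast_one, one_mul, Nat.sub_zero] at h0
  rw [h0]
  have h1 : 0 < (hasseDeriv (n - (m+1)) (-A).charpoly).coeff (m+1) * t^(m+1) :=
    mul_pos (hd_coeff_pos hkn A hp _ le_rfl) (by positivity)
  have h2 : 0 ≤ ∑ i ∈ Finset.range m, (hasseDeriv (n - (m+1)) (-A).charpoly).coeff (i+1) * t^(i+1) :=
    Finset.sum_nonneg fun i hi => mul_nonneg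
      (hd_coeff_pos hkn A hp _ (by have := Finset.mem_range.1 hi; omega)).le (by positivity)
  simp only [pow_zero, mul_one]
  linarith

theorem hd_splits {n k : ℕ} (A : Matrix (Fin n) (Fin n) ℝ) (hA : A.IsHermitian) :
    (hasseDeriv (n - k) (-A).charpoly).Splits := by
  have h1 : (-A).charpoly.Splits := by
    rw [sg_pol A hA]; exact Splits.prod (fun j _ => Splits.X_add_C _)
  have h2 := splits_iter_derivative h1 (n - k)
  have h3 := congrFun (factorial_smul_hasseDeriv (R := ℝ) (k := n - k)) (-A).charpoly
  rw [← h3] at h2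
  have hF : ((n-k).factorial : ℝ) ≠ 0 := by exact_mod_cast (Nat.factorial_pos _).ne'
  have h4 : hasseDeriv (n - k) (-A).charpoly = C (((n-k).factorial : ℝ)⁻¹) *
      (((n-k).factorial • @hasseDeriv ℝ _ (n-k)) (-A).charpoly) := by
    rw [LinearMap.smul_apply, nsmul_eq_mul, ← mul_assoc, ← C_eq_natCast, ← C_mul,
      inv_mul_cancel₀ hF, C_1, one_mul]
  rw [h4]
  exact (Splits.C _).mul h2

theorem amgm_prod (s : Multiset ℝ) (hs : ∀ x ∈ s, 0 < x) (b : ℝ) (hb : 0 < b) (w : ℝ) (hw : 0 ≤ w)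
    (hw1 : w ≤ 1) :
    s.prod ^ (1 - w) * (b ^ w) ^ (Multiset.card s) ≤ (s.map (fun x => (1-w) * x + w * b)).prod := by
  induction s using Multiset.induction_on with
  | empty => simp
  | cons a s ih =>
    have ha := hs a (Multiset.mem_cons_self _ _)
    have hs' : ∀ x ∈ s, 0 < x := fun x hx => hs x (Multiset.mem_cons_of_mem hx)
    have hp : 0 < s.prod := Multiset.prod_pos hs'
    have := ih hs'
    simp only [Multiset.prod_cons, Multiset.card_cons, Multiset.map_cons]
    rw [Real.mul_rpow ha.le hp.le, pow_succ]
    have g := Real.geom_mean_le_arith_mean2_weighted (sub_nonneg.2 hw1) hw ha.le hb.le (by ring)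
    calc _ = (a ^ (1-w) * b ^ w) * (s.prod ^ (1-w) * (b^w)^(Multiset.card s)) := by ring
      _ ≤ _ := mul_le_mul g this (by positivity) (by positivity)

theorem cnk_pos {n k : ℕ} (hkn : k ≤ n) : 0 < cnk n k :=
  Real.rpow_pos_of_pos (by exact_mod_cast Nat.choose_pos hkn) _

theorem cnk_pow {n k : ℕ} (hk : 1 ≤ k) : cnk n k ^ k = (n.choose k : ℝ) := by
  rw [cnk, one_div, Real.rpow_inv_natCast_pow (by positivity) (by omega)]

theorem sg_concave {n k : ℕ} (hk : 1 ≤ k) (hkn : k ≤ n) (A : Matrix (Fin n) (Fin n) ℝ)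
    (hA : A.IsHermitian) (hp : ∀ j ≤ k, 0 < sg j A) (h1 : sg k A = 1) (s : ℝ) (hs : 0 ≤ s) :
    (1 + s) ^ k ≤ sg k (A + (s / cnk n k) • (1 : Matrix (Fin n) (Fin n) ℝ)) := by
  have hc := cnk_pos hkn
  have hck := cnk_pow (n := n) hk
  have h0 := sg_shift A 0 k
  rw [zero_smul, add_zero, h1] at h0
  rw [sg_shift]
  have hspl := hd_splits (k := k) A hA
  have hdeg := hd_deg hkn A
  have hlead : (hasseDeriv (n - k) (-A).charpoly).leadingCoeff = (n.choose k : ℝ) := by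
    rw [leadingCoeff, hdeg, hd_coeff hkn A k le_rfl, Nat.sub_self, sg_zero, mul_one,
      show k + (n-k) = n by omega, Nat.choose_symm hkn]
  have hroots : ∀ r ∈ (hasseDeriv (n - k) (-A).charpoly).roots, r < 0 := by
    intro r hr
    by_contra hc
    push Not at hc
    have := (mem_roots'.1 hr).2
    rw [IsRoot.def, eval_eq_sum_range, hdeg, Finset.sum_range_succ'] at this
    have a1 := hd_coeff_pos hkn A hp 0 (by omega)
    have a2 : 0 ≤ ∑ i ∈ Finset.range k, (hasseDeriv (n - k) (-A).charpoly).coeff (i+1) * r^(i+1) :=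
      Finset.sum_nonneg fun i hi => mul_nonneg
        (hd_coeff_pos hkn A hp _ (by have := Finset.mem_range.1 hi; omega)).le (by positivity)
    simp only [pow_zero, mul_one] at this
    linarith
  have hcard := hspl.natDegree_eq_card_roots
  rw [hdeg] at hcard
  have ev := hspl.eval_eq_prod_roots
  rw [hlead] at ev
  generalize (hasseDeriv (n - k) (-A).charpoly) = q at *
  rw [ev] at h0
  rw [ev]
  set m := q.roots.map (fun r => -r) with hm
  have hm0 : ∀ x ∈ m, 0 < x := by
    intro x hx
    obtain ⟨r, hr, rfl⟩ := Multiset.mem_map.1 hx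
    linarith [hroots r hr]
  have e0 : (q.roots.map (fun r => 0 - r)).prod = m.prod := by simp [hm]
  have es : (q.roots.map (fun r => s / cnk n k - r)).prod = (m.map (fun x => x + s / cnk n k)).prod := by
    rw [hm, Multiset.map_map]; congr 1; apply Multiset.map_congr rfl; intro x _; simp; ring
  rw [e0] at h0
  rw [es]
  set c := cnk n k with hcdef
  have hmp : m.prod = (c⁻¹) ^ k := by
    rw [← hck] at h0
    rw [inv_pow]
    field_simp
    linarith
  have hmc : Multiset.card m = k := by rw [hm, Multiset.card_map, ← hcard]
  have h1s : 0 < 1 + s := by linarith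
  have g := amgm_prod m hm0 c⁻¹ (inv_pos.2 hc) (s / (1+s)) (by positivity)
    (by rw [div_le_one h1s]; linarith)
  have g2 : m.prod ^ (1 - s/(1+s)) * ((c⁻¹) ^ (s/(1+s))) ^ (Multiset.card m) = (c⁻¹)^k := by
    rw [hmp, hmc, ← Real.rpow_natCast, ← Real.rpow_natCast ((c⁻¹)^(s/(1+s))), ← Real.rpow_mul (by positivity),
      ← Real.rpow_mul (by positivity), ← Real.rpow_add (by positivity)]
    congr 1; ring
  rw [g2] at g
  have g3 : (m.map (fun x => x + s / c)).prod =
      (1+s)^k * (m.map (fun x => (1 - s/(1+s)) * x + s/(1+s) * c⁻¹)).prod := by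
    have : ∀ x ∈ m, x + s / c = (1+s) * ((1 - s/(1+s)) * x + s/(1+s) * c⁻¹) := by
      intro x _; field_simp; ring
    rw [Multiset.map_congr rfl this, Multiset.prod_map_mul, Multiset.map_const', Multiset.prod_replicate,
      hmc]
  rw [g3, ← hck]
  have : c^k * (c⁻¹)^k = 1 := by rw [← mul_pow, mul_inv_cancel₀ hc.ne', one_pow]
  calc (1+s)^k = (1+s)^k * (c^k * (c⁻¹)^k) := by rw [this, mul_one]
    _ ≤ (1+s)^k * (c^k * (m.map (fun x => (1 - s/(1+s)) * x + s/(1+s) * c⁻¹)).prod) :=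
      mul_le_mul_of_nonneg_left (mul_le_mul_of_nonneg_left g (by positivity)) (by positivity)
    _ = _ := by ring

/-- cone in terms of `sg` -/
def Cone {n : ℕ} (k : ℕ) (A : Matrix (Fin n) (Fin n) ℝ) : Prop :=
  A.IsHermitian ∧ ∀ j ≤ k, 0 < sg j A

theorem cone_of {n k : ℕ} (hkn : k ≤ n) {A : Matrix (Fin n) (Fin n) ℝ} (h : InGardingCone k A) :
    Cone k A := by
  obtain ⟨hA, h⟩ := h
  refine ⟨hA, fun j hj => ?_⟩
  rcases Nat.eq_zero_or_pos j with rfl | h0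
  · rw [sg_zero]; norm_num
  · rw [← sg_eq A hA j (by omega)]; exact h j h0 hj

theorem sigma_eq {n k : ℕ} (hkn : k ≤ n) {A : Matrix (Fin n) (Fin n) ℝ} (h : A.IsHermitian) :
    sigmaMat k A = sg k A := by
  rw [sigmaMat, dif_pos h, sg_eq A h k hkn]

theorem psd_smul_one {n : ℕ} (t : ℝ) (ht : 0 ≤ t) :
    (t • (1 : Matrix (Fin n) (Fin n) ℝ)).PosSemidef := Matrix.PosSemidef.one.smul ht

theorem Cone.add {n k : ℕ} (hkn : k ≤ n) {A P : Matrix (Fin n) (Fin n) ℝ} (hA : Cone k A)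
    (hP : P.PosSemidef) : Cone k (A + P) :=
  ⟨hA.1.add hP.1, fun j hj => (hA.2 j hj).trans_le (sg_mono hkn A P hA.1 hA.2 hP j hj)⟩

theorem Cone.smul {n k : ℕ} (hkn : k ≤ n) {A : Matrix (Fin n) (Fin n) ℝ} (hA : Cone k A)
    {c : ℝ} (hc : 0 < c) : Cone k (c • A) := by
  refine ⟨?_, fun j hj => ?_⟩
  · rw [Matrix.IsHermitian, Matrix.conjTranspose_smul, hA.1.eq]; simp
  · rw [sg_smul A hA.1 c j (by omega)]; exact mul_pos (by positivity) (hA.2 j hj)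

theorem sg_key {n k : ℕ} (hk : 1 ≤ k) (hkn : k ≤ n) {A B : Matrix (Fin n) (Fin n) ℝ}
    (hA : Cone k A) (δ : ℝ) (hδ : 0 < δ)
    (hP : (B - (A + δ • (1 : Matrix (Fin n) (Fin n) ℝ))).PosSemidef) : sg k A < sg k B := by
  have h1 := sg_shift_lt hk hkn A hA.2 δ hδ
  have h2 := sg_mono hkn _ _ (hA.add hkn (psd_smul_one δ hδ.le)).1
    (hA.add hkn (psd_smul_one δ hδ.le)).2 hP k le_rfl
  rw [add_sub_cancel] at h2
  linarith

theorem sg_null {n k : ℕ} (hk : 1 ≤ k) (hkn : k ≤ n) : sg k (0 : Matrix (Fin n) (Fin n) ℝ) = 0 := by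
  have := sg_smul (0 : Matrix (Fin n) (Fin n) ℝ) Matrix.isHermitian_zero 0 k hkn
  rw [zero_pow (by omega), zero_mul, smul_zero] at this
  exact this

theorem sg_conj {n : ℕ} (A Q : Matrix (Fin n) (Fin n) ℝ) (hQ : Q * Q.transpose = 1) (j : ℕ) :
    sg j (Q.transpose * A * Q) = sg j A := by
  rw [sg, sg, ← neg_mul, ← mul_neg, mul_assoc, Matrix.charpoly_mul_comm, mul_assoc, hQ, mul_one]

theorem Cone.conj {n k : ℕ} {A Q : Matrix (Fin n) (Fin n) ℝ} (hA : Cone k A)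
    (hQ : Q * Q.transpose = 1) : Cone k (Q.transpose * A * Q) := by
  refine ⟨?_, fun j hj => by rw [sg_conj A Q hQ]; exact hA.2 j hj⟩
  have := Matrix.isHermitian_conjTranspose_mul_mul Q hA.1
  simpa [Matrix.conjTranspose_eq_transpose_of_trivial] using this
end Algebra2

section Analysis3

theorem second_test {n : ℕ} {f : Euc n → ℝ} {x : Euc n} (hf : ContDiffAt ℝ 2 f x)
    (hm : IsLocalMax f x) (v : Euc n) : fderiv ℝ (fderiv ℝ f) x v v ≤ 0 := by
  by_contra hc
  push Not at hc
  set L : ℝ → Euc n := fun t => x + t • v with hL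
  have hL0 : L 0 = x := by simp [hL]
  have hLd : ∀ t, HasDerivAt L v t := fun t => by
    have := ((hasDerivAt_id t).smul_const v).const_add x
    simp only [one_smul] at this
    exact this
  have hLc : ContinuousAt L 0 := (hLd 0).continuousAt
  have hev : ∀ᶠ y in 𝓝 x, DifferentiableAt ℝ f y := by
    have := hf.eventually (by simp)
    filter_upwards [this] with y hy using hy.differentiableAt (by simp)
  have hg1 : ∀ᶠ t in 𝓝 (0:ℝ), HasDerivAt (fun t => f (L t)) (fderiv ℝ f (L t) v) t := by
    have : Tendsto L (𝓝 0) (𝓝 x) := by rw [← hL0]; exact hLc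
    filter_upwards [this.eventually hev] with t ht
    exact ht.hasFDerivAt.comp_hasDerivAt t (hLd t)
  have hd1 : deriv (fun t => f (L t)) =ᶠ[𝓝 0] fun t => fderiv ℝ f (L t) v := by
    filter_upwards [hg1] with t ht using ht.deriv
  have hfd : DifferentiableAt ℝ (fderiv ℝ f) x :=
    (hf.fderiv_right (m := 1) (by norm_num)).differentiableAt (by simp)
  have hd2 : HasDerivAt (fun t => fderiv ℝ f (L t) v) (fderiv ℝ (fderiv ℝ f) x v v) 0 := by
    have h1 : HasFDerivAt (fderiv ℝ f) (fderiv ℝ (fderiv ℝ f) x) (L 0) := by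
      rw [hL0]; exact hfd.hasFDerivAt
    have h2 := h1.comp_hasDerivAt (0:ℝ) (hLd 0)
    have h3 := h2.clm_apply (hasDerivAt_const (0:ℝ) v)
    simpa using h3
  have hdd : deriv (deriv (fun t => f (L t))) 0 = fderiv ℝ (fderiv ℝ f) x v v := by
    rw [hd1.deriv_eq, hd2.deriv]
  have hgm : IsLocalMax (fun t => f (L t)) 0 := by
    have : Tendsto L (𝓝 0) (𝓝 x) := by rw [← hL0]; exact hLc
    have := this.eventually hm
    filter_upwards [this] with t ht
    simpa [hL0] using ht
  have hmin : IsLocalMin (fun t => f (L t)) 0 := by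
    apply isLocalMin_of_deriv_deriv_pos
    · rw [hdd]; exact hc
    · exact hgm.deriv_eq_zero
    · exact hg1.self_of_nhds.continuousAt
  have hconst : (fun t => f (L t)) =ᶠ[𝓝 0] fun _ => f (L 0) := by
    filter_upwards [hgm, hmin] with t h1 h2 using le_antisymm h1 h2
  have : deriv (fun t => f (L t)) =ᶠ[𝓝 0] deriv (fun _ => f (L 0)) := hconst.deriv
  rw [this.deriv_eq] at hdd
  simp at hdd
  linarith

theorem hessian_apply {n : ℕ} (f : Euc n → ℝ) (x : Euc n) (i j : Fin n) :
    hessian f x i j = fderiv ℝ (fderiv ℝ f) x (EuclideanSpace.single i 1)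
      (EuclideanSpace.single j 1) := by
  rw [hessian, iteratedFDeriv_two_apply]; rfl

theorem hessian_herm {n : ℕ} {f : Euc n → ℝ} {x : Euc n} (hf : ContDiffAt ℝ 2 f x) :
    (hessian f x).IsHermitian := by
  have h := hf.isSymmSndFDerivAt (by simp)
  ext i j
  rw [Matrix.conjTranspose_apply, star_trivial, hessian_apply, hessian_apply]
  exact h _ _

theorem euc_sum {n : ℕ} (v : Euc n) : v = ∑ i, v i • EuclideanSpace.single i (1:ℝ) := by
  ext j
  simp [Finset.sum_apply, EuclideanSpace.single_apply, Pi.single_apply]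

theorem hessian_quad {n : ℕ} (f : Euc n → ℝ) (x v : Euc n) :
    (fun i => v i) ⬝ᵥ (hessian f x).mulVec (fun i => v i) = fderiv ℝ (fderiv ℝ f) x v v := by
  conv_rhs => rw [euc_sum v]
  simp only [map_sum, ContinuousLinearMap.sum_apply, map_smul, ContinuousLinearMap.smul_apply,
    smul_eq_mul, dotProduct, Matrix.mulVec, Finset.mul_sum]
  rw [Finset.sum_comm]
  refine Finset.sum_congr rfl fun i _ => Finset.sum_congr rfl fun j _ => ?_
  rw [hessian_apply]; ring

theorem psd_of_max {n : ℕ} {f : Euc n → ℝ} {x : Euc n} (hf : ContDiffAt ℝ 2 f x)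
    (hm : IsLocalMax f x) : (-(hessian f x)).PosSemidef := by
  apply Matrix.PosSemidef.of_dotProduct_mulVec_nonneg (hessian_herm hf).neg
  intro w
  have h := second_test hf hm (WithLp.toLp 2 w)
  rw [← hessian_quad] at h
  simp only [star_trivial, Matrix.neg_mulVec, dotProduct_neg]
  simpa using h

theorem hessian_add {n : ℕ} {f g : Euc n → ℝ} {x : Euc n} (hf : ContDiffAt ℝ 2 f x)
    (hg : ContDiffAt ℝ 2 g x) : hessian (f + g) x = hessian f x + hessian g x := by
  ext i j
  simp [hessian, iteratedFDeriv_add_apply (i := 2) hf hg]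

theorem hessian_sub {n : ℕ} {f g : Euc n → ℝ} {x : Euc n} (hf : ContDiffAt ℝ 2 f x)
    (hg : ContDiffAt ℝ 2 g x) : hessian (f - g) x = hessian f x - hessian g x := by
  ext i j
  simp [hessian, iteratedFDeriv_sub_apply (i := 2) hf hg]

theorem hessian_smul {n : ℕ} {f : Euc n → ℝ} {x : Euc n} (hf : ContDiffAt ℝ 2 f x)
    (c : ℝ) : hessian (c • f) x = c • hessian f x := by
  ext i j
  simp [hessian, iteratedFDeriv_const_smul_apply (i := 2) hf]

theorem hessian_normsq {n : ℕ} (x : Euc n) :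
    hessian (fun y : Euc n => ‖y‖^2) x = (2:ℝ) • (1 : Matrix (Fin n) (Fin n) ℝ) := by
  ext i j
  rw [hessian_apply, fderiv_norm_sq]
  have : fderiv ℝ (⇑(2 • innerSL ℝ (E := Euc n))) x = 2 • innerSL ℝ (E := Euc n) :=
    ContinuousLinearMap.fderiv (2 • innerSL ℝ (E := Euc n) : Euc n →L[ℝ] _)
  have h2 : ((2 • ⇑(innerSL ℝ (E := Euc n)) : Euc n → _)) = ⇑(2 • innerSL ℝ (E := Euc n)) := rfl
  rw [h2, this]
  change 2 • (inner ℝ (EuclideanSpace.single i (1:ℝ) : Euc n) (EuclideanSpace.single j (1:ℝ))) = _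
  rw [EuclideanSpace.inner_single_left, Matrix.smul_apply, Matrix.one_apply, PiLp.single_apply]
  simp

theorem normsq_contDiff {n : ℕ} (x : Euc n) : ContDiffAt ℝ 2 (fun y : Euc n => ‖y‖^2) x :=
  (contDiff_norm_sq ℝ).contDiffAt

theorem hessian_const {n : ℕ} (c : ℝ) (x : Euc n) : hessian (fun _ : Euc n => c) x = 0 := by
  ext i j
  rw [hessian_apply]; simp

theorem hessian_congr {n : ℕ} {f g : Euc n → ℝ} {x : Euc n} (h : f =ᶠ[𝓝 x] g) :
    hessian f x = hessian g x := by
  ext i j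
  rw [hessian, hessian, (h.iteratedFDeriv ℝ 2).self_of_nhds]

theorem cmp_aux {n k : ℕ} (hk : 1 ≤ k) (hkn : k ≤ n) {u v : Euc n → ℝ} {x : Euc n}
    (hu : ContDiffAt ℝ 2 u x) (hv : ContDiffAt ℝ 2 v x) (δ : ℝ) (hδ : 0 < δ)
    (hc : Cone k (hessian v x))
    (hm : IsLocalMax (v - u + δ • (fun y : Euc n => ‖y‖^2)) x) :
    sg k (hessian v x) < sg k (hessian u x) := by
  have hn := normsq_contDiff x
  have hvu : ContDiffAt ℝ 2 (v - u) x := hv.sub hu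
  have hδn : ContDiffAt ℝ 2 (δ • fun y : Euc n => ‖y‖^2) x := hn.const_smul δ
  have hsum : ContDiffAt ℝ 2 (v - u + δ • fun y : Euc n => ‖y‖^2) x := hvu.add hδn
  have h := psd_of_max hsum hm
  rw [hessian_add hvu hδn, hessian_sub hv hu, hessian_smul hn,
    hessian_normsq] at h
  apply sg_key hk hkn hc (2 * δ) (by positivity)
  convert h using 1
  rw [smul_smul, mul_comm]
  abel

theorem hess_cmp {n k : ℕ} (hk : 1 ≤ k) (hkn : k ≤ n) {D : Set (Euc n)} (hD : IsOpen D)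
    (hDb : IsBounded D) {u v : Euc n → ℝ} (huc : ContinuousOn u (closure D))
    (hvc : ContinuousOn v (closure D)) (hu : ∀ x ∈ D, ContDiffAt ℝ 2 u x)
    (hv : ∀ x ∈ D, ContDiffAt ℝ 2 v x) (κ : ℝ)
    (hvs : ∀ x ∈ D, Cone k (hessian v x) ∧ κ ≤ sg k (hessian v x))
    (hus : ∀ x ∈ D, sg k (hessian u x) ≤ κ)
    (hb : ∀ x ∈ frontier D, v x ≤ u x) : ∀ x ∈ closure D, v x ≤ u x := by
  intro y hy
  by_contra hcon
  push Not at hcon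
  obtain ⟨r, hr⟩ := hDb.closure.subset_closedBall (0 : Euc n)
  have hr' : ∀ x ∈ closure D, ‖x‖^2 ≤ r^2 := by
    intro x hx
    have := hr hx
    rw [mem_closedBall_zero_iff] at this
    exact pow_le_pow_left₀ (norm_nonneg _) this 2
  set δ : ℝ := (v y - u y) / (2 * (r^2 + 1)) with hδ
  have hδ0 : 0 < δ := by
    apply div_pos (by linarith) (by positivity)
  have hδr : δ * r^2 < v y - u y := by
    rw [hδ, div_mul_eq_mul_div, div_lt_iff₀ (by positivity)]
    nlinarith [sq_nonneg r]
  set w : Euc n → ℝ := v - u + δ • (fun y : Euc n => ‖y‖^2) with hw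
  have hwc : ContinuousOn w (closure D) :=
    (hvc.sub huc).add ((continuous_norm.pow 2).const_smul δ).continuousOn
  obtain ⟨x, hx, hmax⟩ := hDb.isCompact_closure.exists_isMaxOn ⟨y, hy⟩ hwc
  have hwy : w y ≤ w x := hmax hy
  have hwe : ∀ z, w z = v z - u z + δ * ‖z‖^2 := fun z => by simp [hw]
  rw [hwe, hwe] at hwy
  have hxD : x ∈ D := by
    by_contra hxD
    have hf : x ∈ frontier D := ⟨hx, by rwa [hD.interior_eq]⟩
    have := hb x hf
    have h2 := mul_le_mul_of_nonneg_left (hr' x hx) hδ0.le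
    have h3 : 0 ≤ δ * ‖y‖^2 := by positivity
    linarith
  have hloc : IsLocalMax w x := by
    filter_upwards [hD.mem_nhds hxD] with z hz using hmax (subset_closure hz)
  have := cmp_aux hk hkn (hu x hxD) (hv x hxD) δ hδ0 (hvs x hxD).1 hloc
  linarith [(hvs x hxD).2, hus x hxD]

theorem hessian_comp {n : ℕ} (f : Euc n → ℝ) (R : Euc n ≃ₗᵢ[ℝ] Euc n) (x : Euc n) :
    ∃ Q : Matrix (Fin n) (Fin n) ℝ, Q * Q.transpose = 1 ∧
      hessian (fun y => f (R y)) x = Q.transpose * hessian f (R x) * Q := by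
  set Q : Matrix (Fin n) (Fin n) ℝ := fun i j => (R (EuclideanSpace.single j 1)) i with hQ
  refine ⟨Q, ?_, ?_⟩
  · rw [mul_eq_one_comm]
    ext i j
    have h := R.inner_map_map (EuclideanSpace.single j (1:ℝ)) (EuclideanSpace.single i (1:ℝ))
    rw [EuclideanSpace.inner_single_left] at h
    simp only [PiLp.inner_apply, Matrix.mul_apply, Matrix.transpose_apply] at h ⊢
    simp only [hQ]
    simp only [RCLike.inner_apply, conj_trivial, one_mul] at h
    rw [h, Matrix.one_apply, EuclideanSpace.single_apply]
    simp [eq_comm]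
  · have h := R.toContinuousLinearEquiv.iteratedFDerivWithin_comp_right f uniqueDiffOn_univ
      (x := x) (mem_univ _) 2
    rw [preimage_univ, iteratedFDerivWithin_univ, iteratedFDerivWithin_univ] at h
    ext i j
    have e1 : hessian (fun y => f (R y)) x i j = fderiv ℝ (fderiv ℝ f) (R x)
        (R (EuclideanSpace.single i 1)) (R (EuclideanSpace.single j 1)) := by
      rw [hessian]
      have : (fun y => f (R y)) = f ∘ R.toContinuousLinearEquiv := rfl
      rw [this, h, ContinuousMultilinearMap.compContinuousLinearMap_apply, iteratedFDeriv_two_apply]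
      rfl
    rw [e1, euc_sum (R (EuclideanSpace.single i 1)), euc_sum (R (EuclideanSpace.single j 1))]
    simp only [map_sum, ContinuousLinearMap.sum_apply, map_smul, ContinuousLinearMap.smul_apply,
      smul_eq_mul, Matrix.mul_apply, Matrix.transpose_apply, Finset.mul_sum, Finset.sum_mul]
    refine Finset.sum_congr rfl fun a _ => Finset.sum_congr rfl fun b _ => ?_
    rw [hessian_apply]; ring

theorem hessianWithin_eq {n : ℕ} (u : Euc n → ℝ) {s : Set (Euc n)} {x : Euc n} (hs : s ∈ 𝓝 x) :
    hessianWithin u s x = hessian u x := by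
  have : iteratedFDerivWithin ℝ 2 u s x = iteratedFDeriv ℝ 2 u x := by
    rw [← iteratedFDerivWithin_univ]
    exact iteratedFDerivWithin_congr_set (by simpa using hs) 2
  ext i j
  rw [hessianWithin, hessian, this]
end Analysis3

section Dom4

theorem psi_facts {n k : ℕ} (hkn : k ≤ n) {Ω : Set (Euc n)} (hΩo : IsOpen Ω) {ψ : Euc n → ℝ}
    (hψ : IsSol22 k Ω ψ) : ∀ x ∈ Ω, ContDiffAt ℝ 2 ψ x ∧ Cone k (hessian ψ x) ∧
      sg k (hessian ψ x) = 1 := by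
  intro x hx
  have hn : closure Ω ∈ 𝓝 x := mem_of_superset (hΩo.mem_nhds hx) subset_closure
  obtain ⟨h1, h2, -⟩ := hψ
  obtain ⟨ha, hb⟩ := h2 x hx
  rw [hessianWithin_eq ψ hn] at ha hb
  have hc := cone_of hkn ha
  rw [sigma_eq hkn hc.1] at hb
  refine ⟨(h1.contDiffAt hn).of_le ?_, hc, hb⟩
  exact WithTop.coe_le_coe.2 (le_top : (2 : ℕ∞) ≤ ⊤)

theorem ring_open {n : ℕ} {Ω : Set (Euc n)} (hΩo : IsOpen Ω) (ε : ℝ) :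
    IsOpen (Ω \ closedBall (0 : Euc n) ε) := hΩo.sdiff isClosed_closedBall

theorem u_facts {n k : ℕ} (hkn : k ≤ n) {Ω : Set (Euc n)} (hΩo : IsOpen Ω) {u : Euc n → ℝ}
    {ε M : ℝ} (hu : IsSol k Ω 0 ε M u) : ∀ x ∈ Ω \ closedBall (0 : Euc n) ε,
      ContDiffAt ℝ 2 u x ∧ Cone k (hessian u x) ∧ sg k (hessian u x) = 1 := by
  intro x hx
  have hn : ringSet Ω 0 ε ∈ 𝓝 x := mem_of_superset ((ring_open hΩo ε).mem_nhds hx) subset_closure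
  obtain ⟨h1, h2, -⟩ := hu
  obtain ⟨ha, hb⟩ := h2 x hx
  rw [hessianWithin_eq u hn] at ha hb
  have hc := cone_of hkn ha
  rw [sigma_eq hkn hc.1] at hb
  exact ⟨h1.contDiffAt hn, hc, hb⟩

theorem ring_closure {n : ℕ} {Ω : Set (Euc n)} {ε : ℝ} {x : Euc n}
    (hx : x ∈ closure (Ω \ closedBall (0 : Euc n) ε)) : x ∈ closure Ω ∧ ε ≤ ‖x‖ := by
  refine ⟨closure_mono sdiff_subset hx, ?_⟩
  have : closure (Ω \ closedBall (0 : Euc n) ε) ⊆ {y | ε ≤ ‖y‖} := by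
    apply closure_minimal
    · intro y hy
      have := hy.2
      rw [mem_closedBall_zero_iff, not_le] at this
      exact this.le
    · exact isClosed_le continuous_const continuous_norm
  exact this hx

theorem ring_frontier {n : ℕ} {Ω : Set (Euc n)} (hΩo : IsOpen Ω) {ε : ℝ} {x : Euc n}
    (hx : x ∈ frontier (Ω \ closedBall (0 : Euc n) ε)) :
    x ∈ frontier Ω ∨ x ∈ sphere (0 : Euc n) ε := by
  obtain ⟨h1, h2⟩ := hx
  rw [(ring_open hΩo ε).interior_eq] at h2
  obtain ⟨h3, h4⟩ := ring_closure h1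
  rcases h4.eq_or_lt with h | h
  · right; rw [mem_sphere_zero_iff_norm]; exact h.symm
  · left
    refine ⟨h3, ?_⟩
    rw [hΩo.interior_eq]
    intro hx
    exact h2 ⟨hx, by rw [mem_closedBall_zero_iff, not_le]; exact h⟩

theorem psi_neg {n k : ℕ} (hk : 1 ≤ k) (hkn : k ≤ n) {Ω : Set (Euc n)} (hΩo : IsOpen Ω)
    (hΩb : IsBounded Ω) {ψ : Euc n → ℝ} (hψ : IsSol22 k Ω ψ) : ∀ x ∈ Ω, ψ x < 0 := by
  have hf := psi_facts hkn hΩo hψ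
  have hle : ∀ x ∈ closure Ω, ψ x ≤ (fun _ => (0:ℝ)) x := by
    apply hess_cmp hk hkn hΩo hΩb continuousOn_const hψ.1.continuousOn
      (fun x _ => contDiffAt_const) (fun x hx => (hf x hx).1) 1
      (fun x hx => ⟨(hf x hx).2.1, (hf x hx).2.2.ge⟩)
    · intro x _
      rw [hessian_const, sg_null hk hkn]; norm_num
    · intro x hx
      exact (hψ.2.2 x hx).le
  intro x hx
  refine lt_of_le_of_ne (hle x (subset_closure hx)) fun h0 => ?_
  have hm : IsLocalMax ψ x := by
    filter_upwards [hΩo.mem_nhds hx] with z hz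
    rw [h0]; exact hle z (subset_closure hz)
  obtain ⟨h1, h2, h3⟩ := hf x hx
  have h4 := sg_mono hkn _ _ h2.1 h2.2 (psd_of_max h1 hm) k le_rfl
  rw [add_neg_cancel, sg_null hk hkn, h3] at h4
  linarith

theorem u_nonpos {n k : ℕ} (hk : 1 ≤ k) (hkn : k ≤ n) {Ω : Set (Euc n)} (hΩo : IsOpen Ω)
    (hΩb : IsBounded Ω) {u : Euc n → ℝ} {ε M : ℝ} (hM : 0 < M) (hu : IsSol k Ω 0 ε M u) :
    ∀ x ∈ ringSet Ω 0 ε, u x ≤ 0 := by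
  have hf := u_facts hkn hΩo hu
  apply hess_cmp (u := fun _ => (0:ℝ)) hk hkn (ring_open hΩo ε) (hΩb.subset sdiff_subset)
    continuousOn_const hu.1.continuousOn
    (fun x _ => contDiffAt_const) (fun x hx => (hf x hx).1) 1
    (fun x hx => ⟨(hf x hx).2.1, (hf x hx).2.2.ge⟩)
  · intro x _
    rw [hessian_const, sg_null hk hkn]; norm_num
  · intro x hx
    rcases ring_frontier hΩo hx with h | h
    · exact (hu.2.2.1 x h).le
    · rw [hu.2.2.2 x h]; linarith

theorem u_lower {n k : ℕ} (hk : 1 ≤ k) (hkn : k ≤ n) {Ω : Set (Euc n)} (hΩo : IsOpen Ω)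
    (hΩb : IsBounded Ω) {ψ : Euc n → ℝ} (hψ : IsSol22 k Ω ψ) {u : Euc n → ℝ} {ε M A : ℝ}
    (hA : 1 ≤ A) (hAM : ∀ x ∈ sphere (0 : Euc n) ε, A * ψ x ≤ -M) (hu : IsSol k Ω 0 ε M u) :
    ∀ x ∈ ringSet Ω 0 ε, A * ψ x ≤ u x := by
  have hf := u_facts hkn hΩo hu
  have hg := psi_facts hkn hΩo hψ
  have hcl : closure (Ω \ closedBall (0 : Euc n) ε) ⊆ closure Ω := closure_mono sdiff_subset
  refine hess_cmp (v := A • ψ) hk hkn (ring_open hΩo ε) (hΩb.subset sdiff_subset)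
    hu.1.continuousOn ((hψ.1.continuousOn.mono hcl).const_smul A)
    (fun x hx => (hf x hx).1) (fun x hx => (hg x hx.1).1.const_smul A) 1 ?_
    (fun x hx => (hf x hx).2.2.le) ?_
  · intro x hx
    obtain ⟨h1, h2, h3⟩ := hg x hx.1
    rw [hessian_smul h1]
    refine ⟨h2.smul hkn (by linarith), ?_⟩
    rw [sg_smul _ h2.1 A k hkn, h3, mul_one]
    exact one_le_pow₀ hA
  · intro x hx
    rcases ring_frontier hΩo hx with h | h
    · simp [hu.2.2.1 x h, hψ.2.2 x h]
    · rw [hu.2.2.2 x h]; exact hAM x h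

theorem psi_lip {n k : ℕ} {Ω : Set (Euc n)} (hΩo : IsOpen Ω) (hΩne : Ω.Nonempty)
    (hΩc : Convex ℝ Ω)
    (hΩb : IsBounded Ω) {ψ : Euc n → ℝ} (hψ : IsSol22 k Ω ψ) :
    ∃ L : ℝ, 0 ≤ L ∧ ∀ x ∈ closure Ω, ∀ y ∈ closure Ω, |ψ x - ψ y| ≤ L * ‖x - y‖ := by
  have hud : UniqueDiffOn ℝ (closure Ω) := by
    apply uniqueDiffOn_convex hΩc.closure
    exact hΩne.mono (interior_maximal subset_closure hΩo)
  have h2 : ContDiffOn ℝ 1 ψ (closure Ω) := hψ.1.of_le (by exact_mod_cast le_top)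
  have hc : ContinuousOn (fderivWithin ℝ ψ (closure Ω)) (closure Ω) :=
    h2.continuousOn_fderivWithin hud (by norm_num)
  obtain ⟨L, hL⟩ := hΩb.isCompact_closure.exists_bound_of_continuousOn hc
  refine ⟨max L 0, le_max_right _ _, fun x hx y hy => ?_⟩
  have := hΩc.closure.norm_image_sub_le_of_norm_fderivWithin_le (𝕜 := ℝ)
    (h2.differentiableOn (by norm_num)) (fun z hz => (hL z hz).trans (le_max_left L 0)) hy hx
  simpa using this

/-- The constants. -/
theorem u_bound {n k : ℕ} (hk : 1 ≤ k) (hkn : k ≤ n) {Ω : Set (Euc n)} (hΩo : IsOpen Ω)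
    (hΩc : Convex ℝ Ω) (hΩb : IsBounded Ω) {ε₀ : ℝ} (hε₀ : 0 < ε₀)
    (hball : closedBall (0 : Euc n) ε₀ ⊆ Ω) {ψ : Euc n → ℝ} (hψ : IsSol22 k Ω ψ) {M : ℝ}
    (hM : 0 < M) :
    ∃ K : ℝ, 0 < K ∧ ∀ ε ∈ Ioo (0:ℝ) ε₀, ∀ u : Euc n → ℝ, IsSol k Ω 0 ε M u →
      ∀ x ∈ ringSet Ω 0 ε, ∀ y ∈ frontier Ω, -(K * ‖y - x‖) ≤ u x := by
  have h0 : (0 : Euc n) ∈ closedBall (0 : Euc n) ε₀ := by simp [hε₀.le]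
  obtain ⟨L, hL0, hL⟩ := psi_lip hΩo ⟨0, hball h0⟩ hΩc hΩb hψ
  have hcb : IsCompact (closedBall (0 : Euc n) ε₀) := isCompact_closedBall _ _
  obtain ⟨z, hz, hzm⟩ := hcb.exists_isMaxOn ⟨0, h0⟩
    (hψ.1.continuousOn.mono (hball.trans subset_closure))
  have hzn := psi_neg hk hkn hΩo hΩb hψ z (hball hz)
  set A := max 1 (M / (-ψ z)) with hA
  have hA1 : 1 ≤ A := le_max_left _ _
  refine ⟨A * L + 1, by positivity, fun ε hε u hu x hx y hy => ?_⟩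
  have hl := u_lower hk hkn hΩo hΩb hψ (A := A) (M := M) (ε := ε) hA1 (fun w hw => by
    have hw' : w ∈ closedBall (0 : Euc n) ε₀ := by
      rw [mem_sphere_zero_iff_norm] at hw
      rw [mem_closedBall_zero_iff, hw]; exact hε.2.le
    have h1 : ψ w ≤ ψ z := hzm hw'
    have h2 : M ≤ A * (-ψ z) := by
      rw [← div_le_iff₀ (by linarith)]; exact le_max_right _ _
    nlinarith) hu x hx
  have h3 := hL y hy.1 x (ring_closure hx).1
  rw [hψ.2.2 y hy, zero_sub, abs_neg] at h3
  have h4 := (abs_le.mp h3).1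
  have h5 := norm_nonneg (y - x)
  nlinarith
end Dom4

section Rot5

theorem rot_exists {n : ℕ} (ν τ : Euc n) (hν : ‖ν‖ = 1) (hτ : ‖τ‖ = 1) (hντ : inner ℝ ν τ = 0)
    (θ : ℝ) : ∃ R : Euc n ≃ₗᵢ[ℝ] Euc n, R ν = Real.cos θ • ν + Real.sin θ • τ ∧
      ∀ x, ‖R x - x‖ ≤ 2 * |θ| * ‖x‖ := by
  set c := Real.cos θ with hc
  set s := Real.sin θ with hs
  have hcs : s^2 + c^2 = 1 := Real.sin_sq_add_cos_sq θ
  have hτν : inner ℝ τ ν = 0 := by rw [real_inner_comm]; exact hντ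
  have hνν : inner ℝ ν ν = 1 := by rw [real_inner_self_eq_norm_sq, hν]; norm_num
  have hττ : inner ℝ τ τ = 1 := by rw [real_inner_self_eq_norm_sq, hτ]; norm_num
  let T : Euc n →ₗ[ℝ] Euc n :=
    { toFun := fun x => x + (((c-1) * inner ℝ ν x - s * inner ℝ τ x) • ν +
        ((c-1) * inner ℝ τ x + s * inner ℝ ν x) • τ)
      map_add' := fun x y => by
        simp only [inner_add_right]; module
      map_smul' := fun a x => by
        simp only [inner_smul_right, RingHom.id_apply]; module }
  have hT : ∀ x, T x = x + (((c-1) * inner ℝ ν x - s * inner ℝ τ x) • ν +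
        ((c-1) * inner ℝ τ x + s * inner ℝ ν x) • τ) := fun x => rfl
  have hcomb : ∀ α β : ℝ, ‖α • ν + β • τ‖^2 = α^2 + β^2 := by
    intro α β
    rw [← real_inner_self_eq_norm_sq]
    simp only [inner_add_left, inner_add_right, inner_smul_left, inner_smul_right, hνν, hττ, hντ,
      hτν, conj_trivial]
    ring
  have hnorm : ∀ x, ‖T x‖ = ‖x‖ := by
    intro x
    rw [← sq_eq_sq₀ (norm_nonneg _) (norm_nonneg _), hT, norm_add_sq_real, hcomb, inner_add_right,
      inner_smul_right, inner_smul_right, real_inner_comm ν x, real_inner_comm τ x]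
    linear_combination ((inner ℝ ν x)^2 + (inner ℝ τ x)^2) * hcs
  let I : Euc n →ₗᵢ[ℝ] Euc n := ⟨T, hnorm⟩
  refine ⟨I.toLinearIsometryEquiv rfl, ?_, ?_⟩
  · rw [LinearIsometry.coe_toLinearIsometryEquiv]
    change T ν = _
    rw [hT, hνν, hτν]
    module
  · intro x
    rw [LinearIsometry.coe_toLinearIsometryEquiv]
    change ‖T x - x‖ ≤ _
    rw [← sq_le_sq₀ (norm_nonneg _) (by positivity), hT, add_sub_cancel_left, hcomb]
    have h1 : (inner ℝ ν x)^2 ≤ ‖x‖^2 := by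
      rw [sq_le_sq]; have := abs_real_inner_le_norm ν x
      rw [hν, one_mul] at this; simpa using this
    have h2 : (inner ℝ τ x)^2 ≤ ‖x‖^2 := by
      rw [sq_le_sq]; have := abs_real_inner_le_norm τ x
      rw [hτ, one_mul] at this; simpa using this
    have h3 : 2 - 2 * c ≤ θ^2 := by have := Real.one_sub_sq_div_two_le_cos (x := θ); linarith
    have h4 : ((c-1) * inner ℝ ν x - s * inner ℝ τ x)^2 + ((c-1) * inner ℝ τ x + s * inner ℝ ν x)^2
        = (2 - 2*c) * ((inner ℝ ν x)^2 + (inner ℝ τ x)^2) := by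
      linear_combination ((inner ℝ ν x)^2 + (inner ℝ τ x)^2) * hcs
    rw [h4, mul_pow, mul_pow, sq_abs]
    calc (2 - 2*c) * ((inner ℝ ν x)^2 + (inner ℝ τ x)^2)
        ≤ θ^2 * ((inner ℝ ν x)^2 + (inner ℝ τ x)^2) := by gcongr
      _ ≤ θ^2 * (‖x‖^2 + ‖x‖^2) := by gcongr
      _ ≤ _ := by nlinarith [mul_nonneg (sq_nonneg θ) (sq_nonneg ‖x‖)]

theorem ring_mem {n : ℕ} {Ω : Set (Euc n)} {ε₀ ε : ℝ} (hball : closedBall (0 : Euc n) ε₀ ⊆ Ω)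
    {x : Euc n} (h1 : ε < ‖x‖) (h2 : ‖x‖ ≤ ε₀) : x ∈ Ω \ closedBall (0 : Euc n) ε :=
  ⟨hball (by rwa [mem_closedBall_zero_iff]), by rwa [mem_closedBall_zero_iff, not_le]⟩

theorem ring_touch {n : ℕ} {Ω : Set (Euc n)} {ε₀ ε : ℝ} (hε : ε ∈ Ioo (0:ℝ) ε₀)
    (hball : closedBall (0 : Euc n) ε₀ ⊆ Ω) {x : Euc n} (hx : ‖x‖ = ε) :
    ∃ c : Euc n, ∃ r : ℝ, 0 < r ∧ closedBall c r ⊆ ringSet Ω 0 ε ∧ x ∈ closedBall c r := by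
  obtain ⟨h0, h1⟩ := hε
  set r := (ε₀ - ε)/2 with hr
  have hr0 : 0 < r := by rw [hr]; linarith
  have hcn : ‖(1 + r/ε) • x‖ = ε + r := by
    rw [norm_smul, hx, Real.norm_of_nonneg (by positivity)]; field_simp
  refine ⟨(1 + r/ε) • x, r, hr0, ?_, ?_⟩
  · rw [← closure_ball _ hr0.ne']
    apply closure_mono
    intro y hy
    rw [mem_ball, dist_eq_norm] at hy
    apply ring_mem hball
    · have := norm_sub_norm_le ((1 + r/ε) • x) y
      rw [norm_sub_rev] at this
      linarith
    · have := norm_sub_norm_le y ((1 + r/ε) • x)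
      linarith
  · rw [mem_closedBall, dist_eq_norm]
    have : x - (1 + r/ε) • x = (-(r/ε)) • x := by module
    rw [this, norm_smul, hx, norm_neg, Real.norm_of_nonneg (by positivity)]
    field_simp; exact le_rfl

theorem ring_unique {n : ℕ} {Ω : Set (Euc n)} (hΩo : IsOpen Ω) (hΩc : Convex ℝ Ω) {ε₀ ε : ℝ}
    (hε : ε ∈ Ioo (0:ℝ) ε₀) (hball : closedBall (0 : Euc n) ε₀ ⊆ Ω) :
    UniqueDiffOn ℝ (ringSet Ω 0 ε) := by
  intro x hx
  obtain ⟨h1, h2⟩ := ring_closure hx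
  rcases h2.eq_or_lt with h | h
  · obtain ⟨c, r, hr, hs, hxc⟩ := ring_touch hε hball h.symm
    refine UniqueDiffWithinAt.mono ?_ hs
    refine uniqueDiffOn_convex (convex_closedBall c r) ?_ x hxc
    exact ⟨c, interior_maximal ball_subset_closedBall isOpen_ball (mem_ball_self hr)⟩
  · have h0 : (0 : Euc n) ∈ Ω := hball (by simp [(hε.1.trans hε.2).le])
    have hud : UniqueDiffWithinAt ℝ (closure Ω) x :=
      uniqueDiffOn_convex hΩc.closure ⟨0, interior_maximal subset_closure hΩo h0⟩ x h1
    have ho : IsOpen {y : Euc n | ε < ‖y‖} := isOpen_lt continuous_const continuous_norm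
    refine (hud.inter (ho.mem_nhds h)).mono ?_
    refine ho.closure_inter.trans (closure_mono ?_)
    intro y hy
    exact ⟨hy.1, by rw [mem_closedBall_zero_iff, not_le]; exact hy.2⟩

theorem right_deriv_nonneg {h : ℝ → ℝ} {h' a b : ℝ} (hab : a < b)
    (hd : HasDerivWithinAt h h' (Ioo a b) a) (h0 : h a = 0) (hp : ∀ t ∈ Ioo a b, 0 ≤ h t) :
    0 ≤ h' := by
  rw [hasDerivWithinAt_iff_tendsto_slope' (by simp)] at hd
  haveI : (𝓝[Ioo a b] a).NeBot := left_nhdsWithin_Ioo_neBot hab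
  refine ge_of_tendsto hd ?_
  filter_upwards [self_mem_nhdsWithin] with t ht
  rw [slope_def_field, h0, sub_zero]
  exact div_nonneg (hp t ht) (by linarith [ht.1])
end Rot5

section Main6

theorem rot_cmp {n k : ℕ} (hk : 1 ≤ k) (hkn : k ≤ n) {Ω : Set (Euc n)} (hΩo : IsOpen Ω)
    (hΩb : IsBounded Ω) {u : Euc n → ℝ} {ε M M₁ : ℝ} (hε : 0 < ε) (hM : 0 < M) (hMM : M₁ < M)
    (hsub : ∀ x ∈ frontier Ω, underSol k (0 : Euc n) ε M₁ x ≤ 0)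
    (hu : IsSol k Ω 0 ε M u) (R : Euc n ≃ₗᵢ[ℝ] Euc n) (s : ℝ) (hs : 0 ≤ s)
    (hb : ∀ x ∈ ringSet Ω 0 ε, R x ∈ frontier Ω → -(s * (M - M₁)) ≤ (1 + s) * u x) :
    ∀ x ∈ Ω \ closedBall (0 : Euc n) ε, R x ∈ Ω → u (R x) + M ≤ (1 + s) * (u x + M) := by
  have hc := cnk_pos hkn
  have hf := u_facts hkn hΩo hu
  have hnp := u_nonpos hk hkn hΩo hΩb hM hu
  set D : Set (Euc n) := (Ω \ closedBall (0 : Euc n) ε) ∩ R ⁻¹' Ω with hD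
  have hRb : ∀ x, R x ∈ closedBall (0 : Euc n) ε ↔ x ∈ closedBall (0 : Euc n) ε := fun x => by
    rw [mem_closedBall_zero_iff, mem_closedBall_zero_iff, R.norm_map]
  have hRD : ∀ x ∈ D, R x ∈ Ω \ closedBall (0 : Euc n) ε := fun x hx =>
    ⟨hx.2, by rw [hRb]; exact hx.1.2⟩
  have hDo : IsOpen D := (ring_open hΩo ε).inter (hΩo.preimage R.continuous)
  have hDb : IsBounded D := hΩb.subset (inter_subset_left.trans sdiff_subset)
  have hcl : closure D ⊆ ringSet Ω 0 ε := closure_mono inter_subset_left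
  have hRcl : MapsTo R (closure D) (ringSet Ω 0 ε) :=
    (show MapsTo R D (Ω \ closedBall (0 : Euc n) ε) from hRD).closure R.continuous
  set q : Euc n → ℝ := (s / (2 * cnk n k)) • (fun y : Euc n => ‖y‖^2) with hq
  set d : ℝ := -(s * (ε^2 / (2 * cnk n k) + M)) with hd
  set w : Euc n → ℝ := (fun y => u (R y)) + q + (fun _ => d) with hw
  have hwe : ∀ x, w x = u (R x) + s * underSol k (0 : Euc n) ε M x := fun x => by
    simp only [hw, hq, hd, Pi.add_apply, Pi.smul_apply, smul_eq_mul, underSol, sub_zero]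
    ring
  have huR : ∀ x ∈ D, ContDiffAt ℝ 2 (fun y => u (R y)) x := fun x hx =>
    ((hf (R x) (hRD x hx)).1).comp x R.contDiff.contDiffAt
  have hqd : ∀ x, ContDiffAt ℝ 2 q x := fun x =>
    (normsq_contDiff x).const_smul (s / (2 * cnk n k))
  have h1d : ∀ x ∈ D, ContDiffAt ℝ 2 ((fun y => u (R y)) + q) x := fun x hx =>
    (huR x hx).add (hqd x)
  have hwd : ∀ x ∈ D, ContDiffAt ℝ 2 w x := fun x hx => (h1d x hx).add contDiffAt_const
  have key : ∀ x ∈ closure D, w x ≤ ((1 + s) • u) x := by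
    refine hess_cmp hk hkn hDo hDb ((hu.1.continuousOn.mono hcl).const_smul (1+s)) ?_
      (fun x hx => (hf x hx.1).1.const_smul (1+s)) hwd ((1+s)^k) ?_ ?_ ?_
    · refine ((hu.1.continuousOn.comp R.continuous.continuousOn hRcl).add ?_).add
        continuousOn_const
      exact ((continuous_norm.pow 2).const_smul _).continuousOn
    · intro x hx
      have hH : hessian w x = hessian (fun y => u (R y)) x +
          (s / cnk n k) • (1 : Matrix (Fin n) (Fin n) ℝ) := by
        rw [hw, hessian_add (h1d x hx) contDiffAt_const, hessian_add (huR x hx) (hqd x),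
          hessian_const, hq, hessian_smul (normsq_contDiff x), hessian_normsq, smul_smul, add_zero]
        congr 2
        field_simp
      obtain ⟨Q, hQ, hQe⟩ := hessian_comp u R x
      obtain ⟨-, hC, h1⟩ := hf (R x) (hRD x hx)
      have hC' := hC.conj hQ
      have h1' := sg_conj (hessian u (R x)) Q hQ k
      rw [h1, ← hQe] at h1'
      rw [← hQe] at hC'
      rw [hH]
      exact ⟨hC'.add hkn (psd_smul_one _ (by positivity)),
        sg_concave hk hkn _ hC'.1 hC'.2 h1' s hs⟩
    · intro x hx
      obtain ⟨h1, h2, h3⟩ := hf x hx.1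
      rw [hessian_smul h1, sg_smul _ h2.1 _ k hkn, h3, mul_one]
    · intro x hx
      obtain ⟨hxc, hxi⟩ := hx
      rw [hDo.interior_eq] at hxi
      have hxr := hcl hxc
      have hRr := hRcl hxc
      rw [hwe, Pi.smul_apply, smul_eq_mul]
      have hMs : underSol k (0 : Euc n) ε M x = underSol k (0 : Euc n) ε M₁ x + M₁ - M := by
        simp only [underSol]; ring
      by_cases h1 : x ∈ frontier Ω
      · have h2 := hsub x h1
        rw [hu.2.2.1 x h1, hMs]
        have h3 := hnp _ hRr
        nlinarith
      by_cases h2 : R x ∈ frontier Ω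
      · have h3 := hsub _ h2
        have h4 : underSol k (0 : Euc n) ε M₁ (R x) = underSol k (0 : Euc n) ε M₁ x := by
          simp only [underSol, sub_zero, R.norm_map]
        rw [h4] at h3
        rw [hu.2.2.1 _ h2, hMs]
        have h5 := hb x hxr h2
        nlinarith
      have h3 : ‖x‖ = ε := by
        obtain ⟨ha, hb⟩ := ring_closure hxr
        obtain ⟨hc, -⟩ := ring_closure hRr
        rcases hb.eq_or_lt with h | h
        · exact h.symm
        · exfalso
          have e1 : x ∈ Ω := by
            by_contra hh; exact h1 ⟨ha, by rwa [hΩo.interior_eq]⟩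
          have e2 : R x ∈ Ω := by
            by_contra hh; exact h2 ⟨hc, by rwa [hΩo.interior_eq]⟩
          exact hxi ⟨⟨e1, by rw [mem_closedBall_zero_iff, not_le]; exact h⟩, e2⟩
      have h4 : u x = -M := hu.2.2.2 x (by rwa [mem_sphere_zero_iff_norm])
      have h5 : u (R x) = -M := hu.2.2.2 _ (by rwa [mem_sphere_zero_iff_norm, R.norm_map])
      rw [h4, h5, underSol, sub_zero, h3]
      apply le_of_eq; ring
  intro x hx hRx
  have h1 := key x (subset_closure ⟨hx, hRx⟩)
  rw [hwe, Pi.smul_apply, smul_eq_mul] at h1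
  have h2 : -M ≤ underSol k (0 : Euc n) ε M x := by
    have hxn : ε < ‖x‖ := by
      have := hx.2; rwa [mem_closedBall_zero_iff, not_le] at this
    have h3 : ε^2 / (2 * cnk n k) ≤ ‖x‖^2 / (2 * cnk n k) := by gcongr
    rw [underSol, sub_zero]; linarith
  nlinarith

theorem normal_cmp {n : ℕ} {Ω : Set (Euc n)} {ε₀ ε : ℝ} (hε : ε ∈ Ioo (0:ℝ) ε₀)
    (hball : closedBall (0 : Euc n) ε₀ ⊆ Ω) {u : Euc n → ℝ} {M s : ℝ}
    (hu : DifferentiableOn ℝ u (ringSet Ω 0 ε))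
    (hub : ∀ x ∈ sphere (0 : Euc n) ε, u x = -M) {ν ν' : Euc n} (hν : ‖ν‖ = 1) (hν' : ‖ν'‖ = 1)
    (h : ∀ t ∈ Ioo ε ε₀, u (t • ν') + M ≤ (1 + s) * (u (t • ν) + M)) :
    fderivWithin ℝ u (ringSet Ω 0 ε) (ε • ν') ν' ≤
      (1 + s) * fderivWithin ℝ u (ringSet Ω 0 ε) (ε • ν) ν := by
  obtain ⟨h0, h1⟩ := hε
  have hn : ∀ w : Euc n, ‖w‖ = 1 → ∀ t : ℝ, 0 < t → ‖t • w‖ = t := fun w hw t ht => by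
    rw [norm_smul, hw, mul_one, Real.norm_of_nonneg ht.le]
  have hd : ∀ w : Euc n, ‖w‖ = 1 → u (ε • w) = -M ∧ HasDerivWithinAt (fun t : ℝ => u (t • w))
      (fderivWithin ℝ u (ringSet Ω 0 ε) (ε • w) w) (Ioo ε ε₀) ε := by
    intro w hw
    refine ⟨hub _ (by rw [mem_sphere_zero_iff_norm]; exact hn w hw ε h0), ?_⟩
    obtain ⟨c, r, -, hs, hxc⟩ := ring_touch ⟨h0, h1⟩ hball (hn w hw ε h0)
    have hF := (hu _ (hs hxc)).hasFDerivWithinAt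
    have hL : HasDerivWithinAt (fun t : ℝ => t • w) w (Ioo ε ε₀) ε := by
      have := ((hasDerivAt_id ε).smul_const w).hasDerivWithinAt (s := Ioo ε ε₀)
      simp only [one_smul] at this
      exact this
    refine hF.comp_hasDerivWithinAt ε hL ?_
    intro t ht
    have := hn w hw t (h0.trans ht.1)
    exact subset_closure (ring_mem hball (by rw [this]; exact ht.1) (by rw [this]; exact ht.2.le))
  obtain ⟨a1, a2⟩ := hd ν hν
  obtain ⟨b1, b2⟩ := hd ν' hν'
  have := right_deriv_nonneg (h := fun t => (1 + s) * (u (t • ν) + M) - (u (t • ν') + M)) h1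
    (((a2.add_const M).const_mul (1+s)).sub (b2.add_const M))
    (by simp only [a1, b1]; ring) (fun t ht => by have := h t ht; linarith)
  linarith

theorem mixed_bound {n : ℕ} {Ω : Set (Euc n)} (hΩo : IsOpen Ω) (hΩc : Convex ℝ Ω) {ε₀ ε : ℝ}
    (hε : ε ∈ Ioo (0:ℝ) ε₀)
    (hball : closedBall (0 : Euc n) ε₀ ⊆ Ω) {u : Euc n → ℝ} {M B θ₀ : ℝ}
    (hu : ContDiffOn ℝ 2 u (ringSet Ω 0 ε)) (hθ₀ : 0 < θ₀)
    (hub : ∀ x ∈ sphere (0 : Euc n) ε, u x = -M) {ν τ : Euc n} (hν : ‖ν‖ = 1) (hτ : ‖τ‖ = 1)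
    (hντ : inner ℝ ν τ = 0)
    (h : ∀ θ ∈ Ioo 0 θ₀, fderivWithin ℝ u (ringSet Ω 0 ε) (ε • (Real.cos θ • ν + Real.sin θ • τ))
        (Real.cos θ • ν + Real.sin θ • τ) ≤
      (1 + B * θ) * fderivWithin ℝ u (ringSet Ω 0 ε) (ε • ν) ν) :
    ε * iteratedFDerivWithin ℝ 2 u (ringSet Ω 0 ε) (ε • ν) ![τ, ν] ≤
      B * fderivWithin ℝ u (ringSet Ω 0 ε) (ε • ν) ν := by
  have hud := ring_unique hΩo hΩc hε hball
  set S := ringSet Ω 0 ε with hS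
  set g : ℝ → Euc n := fun θ => Real.cos θ • ν + Real.sin θ • τ with hg
  have hg0 : g 0 = ν := by simp [hg]
  have hgd : HasDerivAt g τ 0 := by
    have := ((Real.hasDerivAt_cos 0).smul_const ν).add ((Real.hasDerivAt_sin 0).smul_const τ)
    simp only [Real.sin_zero, Real.cos_zero, neg_zero, zero_smul, zero_add, one_smul] at this
    exact this
  have hgn : ∀ θ, ‖g θ‖ = 1 := by
    intro θ
    rw [← sq_eq_sq₀ (norm_nonneg _) (by norm_num), hg]
    simp only
    rw [norm_add_sq_real, norm_smul, norm_smul, inner_smul_left, inner_smul_right, hντ, hν, hτ]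
    simp
  have hgs : ∀ θ, ε • g θ ∈ sphere (0 : Euc n) ε := fun θ => by
    rw [mem_sphere_zero_iff_norm, norm_smul, hgn, mul_one, Real.norm_of_nonneg hε.1.le]
  have hgS : ∀ θ, ε • g θ ∈ S := fun θ => by
    obtain ⟨c, r, -, hs, hxc⟩ := ring_touch hε hball (mem_sphere_zero_iff_norm.1 (hgs θ))
    exact hs hxc
  have hegd : HasDerivWithinAt (fun θ => ε • g θ) (ε • τ) univ 0 :=
    (hgd.const_smul ε).hasDerivWithinAt
  have hmaps : MapsTo (fun θ => ε • g θ) univ S := fun θ _ => hgS θ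
  have hp : ε • ν ∈ S := by have := hgS 0; rwa [hg0] at this
  have hF : HasFDerivWithinAt u (fderivWithin ℝ u S (ε • ν)) S (ε • g 0) := by
    rw [hg0]; exact (hu.differentiableOn (by norm_num) _ hp).hasFDerivWithinAt
  have htan : fderivWithin ℝ u S (ε • ν) τ = 0 := by
    have h1 := hF.comp_hasDerivWithinAt 0 hegd hmaps
    rw [hasDerivWithinAt_univ] at h1
    have h2 : (u ∘ fun θ => ε • g θ) = fun _ => -M := funext fun θ => hub _ (hgs θ)
    rw [h2] at h1
    have h3 := h1.unique (hasDerivAt_const _ _)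
    rw [map_smul, smul_eq_mul] at h3
    exact (mul_eq_zero.1 h3).resolve_left hε.1.ne'
  have hFF : HasFDerivWithinAt (fderivWithin ℝ u S) (fderivWithin ℝ (fderivWithin ℝ u S) S (ε • ν))
      S (ε • g 0) := by
    rw [hg0]
    exact ((hu.fderivWithin hud (m := 1) (by norm_num)).differentiableOn (by norm_num) _
      hp).hasFDerivWithinAt
  have hG := hFF.comp_hasDerivWithinAt 0 hegd hmaps
  rw [hasDerivWithinAt_univ] at hG
  have hG2 := hG.clm_apply hgd
  simp only [Function.comp_apply, hg0, htan, add_zero, map_smul] at hG2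
  have hlin : HasDerivAt (fun θ : ℝ => (1 + B * θ) * fderivWithin ℝ u S (ε • ν) ν)
      (B * fderivWithin ℝ u S (ε • ν) ν) 0 := by
    have := (((hasDerivAt_id (0:ℝ)).const_mul B).const_add 1).mul_const
      (fderivWithin ℝ u S (ε • ν) ν)
    simp only [mul_one] at this
    exact this
  have := right_deriv_nonneg hθ₀ (hlin.sub hG2).hasDerivWithinAt
    (by simp [hg0]) (fun t ht => by have := h t ht; simp only [Pi.sub_apply]; linarith)
  rw [iteratedFDerivWithin_two_apply u hud hp]
  simp only [Matrix.cons_val_zero, Matrix.cons_val_one]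
  simp only [ContinuousLinearMap.smul_apply, smul_eq_mul] at this
  linarith
end Main6

/-- `C²` bound on `∂B_ε(0)` in the mixed tangential-normal directions. -/
theorem statement9 {n k : ℕ} (hk : 1 ≤ k) (hkn : k ≤ n)
    (Ω₁ : Set (Euc n)) (hΩo : IsOpen Ω₁) (hΩconv : Convex ℝ Ω₁)
    (hΩb : IsBounded Ω₁) (hΩs : HasSmoothBoundary Ω₁)
    (ε₀ : ℝ) (hε₀ : 0 < ε₀) (hball : closedBall (0 : Euc n) ε₀ ⊆ Ω₁)
    (ψ : Euc n → ℝ) (hψ : IsSol22 k Ω₁ ψ)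
    (M₁ : ℝ) (hM₁ : 0 < M₁) (hM₁ψ : ∀ x ∈ closure Ω₁, -ψ x < M₁)
    (hM₁sub : ∀ ε ∈ Ioo (0:ℝ) ε₀, ∀ x ∈ frontier Ω₁, underSol k (0 : Euc n) ε M₁ x ≤ 0)
    (M : ℝ) (hM : M₁ < M)
 :
    ∃ C : ℝ, 0 < C ∧ ∀ ε ∈ Ioo (0:ℝ) ε₀, ∀ u : Euc n → ℝ,
      IsSol k Ω₁ (0 : Euc n) ε M u → ∀ p ∈ sphere (0 : Euc n) ε, ∀ τ : Euc n,
        ‖τ‖ = 1 → ⟪τ, p⟫ = 0 →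
        |iteratedFDerivWithin ℝ 2 u (ringSet Ω₁ (0 : Euc n) ε) p ![τ, ε⁻¹ • p]| ≤
          C / ε * fderivWithin ℝ u (ringSet Ω₁ (0 : Euc n) ε) p (ε⁻¹ • p) := by
  have hMp : 0 < M := hM₁.trans hM
  have hMd : 0 < M - M₁ := by linarith
  obtain ⟨K, hK, hKu⟩ := u_bound hk hkn hΩo hΩconv hΩb hε₀ hball hψ hMp
  obtain ⟨r, hr0, hr⟩ := hΩb.closure.subset_closedBall_lt 0 (0 : Euc n)
  set B : ℝ := 4 * K * r / (M - M₁) with hB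
  have hB0 : 0 < B := by positivity
  have hBM : B * (M - M₁) = 4 * K * r := by rw [hB]; field_simp
  refine ⟨B, hB0, fun ε hε u hu p hp τ hτ hτp => ?_⟩
  have hε0 := hε.1
  rw [mem_sphere_zero_iff_norm] at hp
  set ν : Euc n := ε⁻¹ • p with hν
  have hpν : p = ε • ν := by rw [hν, smul_smul, mul_inv_cancel₀ hε0.ne', one_smul]
  have hν1 : ‖ν‖ = 1 := by
    rw [hν, norm_smul, hp, Real.norm_of_nonneg (by positivity), inv_mul_cancel₀ hε0.ne']
  have hud := ring_unique hΩo hΩconv hε hball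
  have main : ∀ σ : Euc n, ‖σ‖ = 1 → inner ℝ ν σ = 0 →
      ε * iteratedFDerivWithin ℝ 2 u (ringSet Ω₁ 0 ε) (ε • ν) ![σ, ν] ≤
        B * fderivWithin ℝ u (ringSet Ω₁ 0 ε) (ε • ν) ν := by
    intro σ hσ hνσ
    refine mixed_bound hΩo hΩconv hε hball (θ₀ := 1 / B) (M := M) hu.1 (by positivity) hu.2.2.2
      hν1 hσ hνσ ?_
    intro θ hθ
    have hθB : B * θ ≤ 1 := by
      have := hθ.2.le
      rw [le_div_iff₀ hB0] at this; linarith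
    obtain ⟨R, hRν, hRd⟩ := rot_exists ν σ hν1 hσ hνσ θ
    rw [← hRν]
    refine normal_cmp hε hball (M := M) (hu.1.differentiableOn (by norm_num)) hu.2.2.2 hν1
      (by rw [R.norm_map, hν1]) ?_
    intro t ht
    have ht0 : 0 < t := hε0.trans ht.1
    have hn : ‖t • ν‖ = t := by rw [norm_smul, hν1, mul_one, Real.norm_of_nonneg ht0.le]
    rw [← map_smul]
    refine rot_cmp hk hkn hΩo hΩb hε0 hMp hM (hM₁sub ε hε) hu R (B * θ)
      (mul_nonneg hB0.le hθ.1.le) ?_ (t • ν)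
      (ring_mem hball (by rw [hn]; exact ht.1) (by rw [hn]; exact ht.2.le))
      (hball (by rw [mem_closedBall_zero_iff, R.norm_map, hn]; exact ht.2.le))
    intro x hx hRx
    have h1 := hKu ε hε u hu x hx (R x) hRx
    have h2 := hRd x
    rw [abs_of_pos hθ.1] at h2
    have h3 : ‖x‖ ≤ r := by
      have := hr (ring_closure hx).1
      rwa [mem_closedBall_zero_iff] at this
    have h4 : K * ‖R x - x‖ ≤ K * (2 * θ * r) := by
      have : 2 * θ * ‖x‖ ≤ 2 * θ * r := mul_le_mul_of_nonneg_left h3 (by linarith [hθ.1])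
      exact mul_le_mul_of_nonneg_left (h2.trans this) hK.le
    have h5 : 0 < K * (2 * θ * r) := by have := hθ.1; positivity
    have h6 : 0 < B * θ := mul_pos hB0 hθ.1
    have h7 : B * θ * (M - M₁) = 2 * (K * (2 * θ * r)) := by
      linear_combination θ * hBM
    rw [h7]
    have h8 : -(K * (2 * θ * r)) ≤ u x := by linarith
    nlinarith
  have hντ : inner ℝ ν τ = 0 := by
    rw [hν, inner_smul_left, real_inner_comm, hτp, mul_zero]
  have e1 := main τ hτ hντ
  have e2 := main (-τ) (by rw [norm_neg, hτ]) (by rw [inner_neg_right, hντ, neg_zero])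
  have hpS : ε • ν ∈ ringSet Ω₁ (0 : Euc n) ε := by
    obtain ⟨c, ρ, -, hs, hxc⟩ := ring_touch hε hball hp
    rw [← hpν]; exact hs hxc
  rw [hpν]
  rw [iteratedFDerivWithin_two_apply u hud hpS] at e1 e2 ⊢
  simp only [Matrix.cons_val_zero, Matrix.cons_val_one, map_neg,
    ContinuousLinearMap.neg_apply] at e1 e2 ⊢
  rw [div_mul_eq_mul_div, le_div_iff₀ hε0, ← abs_of_pos hε0, ← abs_mul, abs_of_pos hε0, abs_le]
  constructor <;> linarith
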